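/- arXiv:2007.08967 — 15 statements merged into one kernel-verified Lean document; each statement's English description precedes it below -/
import Mathlib

section
/- Let G be a finite group and ψ: G → G an abelian endomorphism. Then the set N_ψ = {η_g : g ∈ G}, where η_g(h) = g ψ(g)⁻¹ h ψ(g), is a subgroup of Perm(G) which is regular and G-stable. -/
/-- Let `G` be a finite group and `ψ : G → G` an abelian endomorphism
(i.e. its image is abelian). Then the set `N_ψ = {η_g : g ∈ G}`, where
`η_g (h) = g ψ(g)⁻¹ h ψ(g)`, is a subgroup of `Perm G` which is regular and `G`-stable. -/
theorem abelian_map_regular_stable_subgroup {G : Type*} [Group G] [Finite G]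
    (ψ : G →* G) (hab : ∀ x y : G, ψ x * ψ y = ψ y * ψ x)
    (η : G → Equiv.Perm G)
    (hη : ∀ g h : G, η g h = g * (ψ g)⁻¹ * h * ψ g) :
    ∃ N : Subgroup (Equiv.Perm G),
      (N : Set (Equiv.Perm G)) = Set.range η ∧
      (∀ h k : G, ∃! π : Equiv.Perm G, π ∈ N ∧ π h = k) ∧
      (∀ g : G, ∀ π ∈ N, (Equiv.mulLeft g) * π * (Equiv.mulLeft g)⁻¹ ∈ N) := by
  have hc : ∀ c x : G, ψ (c⁻¹ * x * c) = ψ x := by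
    intro c x
    rw [map_mul, hab, ← map_mul]
    congr 1
    group
  have hmul : ∀ g k : G, η g * η k = η (g * ((ψ g)⁻¹ * k * ψ g)) := by
    intro g k
    ext h
    rw [Equiv.Perm.mul_apply, hη, hη, hη, map_mul, hc, hab g k]
    group
  have hone : η 1 = 1 := by
    ext h
    simp [hη]
  have hinv : ∀ g : G, (η g)⁻¹ = η (ψ g * g⁻¹ * (ψ g)⁻¹) := by
    intro g
    rw [inv_eq_iff_mul_eq_one, hmul, ← hone]
    congr 1
    group
  refine ⟨{ carrier := Set.range η, mul_mem' := ?_, one_mem' := ⟨1, hone⟩, inv_mem' := ?_ },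
    rfl, ?_, ?_⟩
  · rintro _ _ ⟨g, rfl⟩ ⟨k, rfl⟩
    exact ⟨_, (hmul g k).symm⟩
  · rintro _ ⟨g, rfl⟩
    exact ⟨_, (hinv g).symm⟩
  · intro h k
    refine ⟨η (k * ((ψ (k * h⁻¹))⁻¹ * h⁻¹ * ψ (k * h⁻¹))), ⟨⟨_, rfl⟩, ?_⟩, ?_⟩
    · rw [hη, map_mul _ k (_ * _), hc, ← map_mul]
      group
    · rintro _ ⟨⟨g, rfl⟩, hg⟩
      rw [hη] at hg
      have e : ψ k = ψ g * ψ h := by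
        rw [← hg, mul_assoc g, mul_assoc g, map_mul, hc]
      have e2 : ψ (k * h⁻¹) = ψ g := by
        rw [map_mul, e, map_inv]
        group
      rw [e2, ← hg]
      congr 1
      group
  · rintro g _ ⟨k, rfl⟩
    refine ⟨g * k * g⁻¹ * (g * (ψ k)⁻¹ * g⁻¹ * ψ k), ?_⟩
    have e : ψ (g * k * g⁻¹ * (g * (ψ k)⁻¹ * g⁻¹ * ψ k)) = ψ k := by
      have h1 := hc g⁻¹ k
      have h2 := hc g⁻¹ (ψ k)⁻¹
      rw [inv_inv] at h1 h2
      rw [map_mul, h1, map_mul, h2, ← map_mul ψ (ψ k)⁻¹]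
      simp
    ext h
    rw [hη, e]
    simp [hη, mul_assoc]
end

section
/- Let G be a group and ψ: G → G an abelian endomorphism. Then for all g, k ∈ G the permutations η_g satisfy the composition law η_g ∘ η_k = η_{g ψ(g)⁻¹ k ψ(g)}, and consequently the inverse of η_g is η_{ψ(g) g⁻¹ ψ(g)⁻¹}. -/
/-- Composition law for the permutations `η_g` attached to an abelian
endomorphism `ψ`: `η_g ∘ η_k = η_{g ψ(g)⁻¹ k ψ(g)}`, and consequently
`(η_g)⁻¹ = η_{ψ(g) g⁻¹ ψ(g)⁻¹}`. -/
theorem eta_comp_and_inv {G : Type*} [Group G]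
    (ψ : G →* G) (hab : ∀ x y : G, ψ x * ψ y = ψ y * ψ x)
    (η : G → Equiv.Perm G)
    (hη : ∀ g h : G, η g h = g * (ψ g)⁻¹ * h * ψ g) :
    (∀ g k : G, η g * η k = η (g * (ψ g)⁻¹ * k * ψ g)) ∧
    (∀ g : G, (η g)⁻¹ = η (ψ g * g⁻¹ * (ψ g)⁻¹)) := by
  have hm : ∀ g k : G, ψ (g * (ψ g)⁻¹ * k * ψ g) = ψ k * ψ g := by
    intro g k
    rw [map_mul, map_mul, map_mul, mul_assoc, hab k (ψ g), map_inv]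
    rw [← hab g k]
    group
  have h1 : ∀ g k : G, η g * η k = η (g * (ψ g)⁻¹ * k * ψ g) := by
    intro g k
    ext h
    rw [Equiv.Perm.mul_apply, hη, hη, hη, hm]
    group
  refine ⟨h1, fun g => ?_⟩
  rw [inv_eq_iff_mul_eq_one, h1]
  have e : g * (ψ g)⁻¹ * (ψ g * g⁻¹ * (ψ g)⁻¹) * ψ g = 1 := by group
  rw [e]
  ext h
  simp [hη]
end

section
/- Let G be a group and ψ: G → G an abelian endomorphism. Then for all g, k ∈ G, conjugation by the left translation λ(k) satisfies λ(k) ∘ η_g ∘ λ(k)⁻¹ = η_{k g ψ(g)⁻¹ k⁻¹ ψ(g)}. -/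
/-- For an abelian endomorphism `ψ` of a group `G`, conjugating `η_g`
by the left translation `λ(k)` gives `λ(k) ∘ η_g ∘ λ(k)⁻¹ = η_{k g ψ(g)⁻¹ k⁻¹ ψ(g)}`. -/
theorem eta_conj_mulLeft {G : Type*} [Group G]
    (ψ : G →* G) (hab : ∀ x y : G, ψ x * ψ y = ψ y * ψ x)
    (η : G → Equiv.Perm G)
    (hη : ∀ g h : G, η g h = g * (ψ g)⁻¹ * h * ψ g) :
    ∀ g k : G,
      (Equiv.mulLeft k) * η g * (Equiv.mulLeft k)⁻¹ = η (k * g * (ψ g)⁻¹ * k⁻¹ * ψ g) := by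
  intro g k
  have hm : ψ (k * g * (ψ g)⁻¹ * k⁻¹ * ψ g) = ψ g := by
    have h1 := hab k (g * (ψ g)⁻¹)
    simp only [map_mul, map_inv] at h1 ⊢
    rw [← mul_assoc] at h1
    rw [h1]
    group
  ext h
  rw [hη, hm]
  simp only [Equiv.Perm.mul_apply, hη, Equiv.mulLeft_symm_apply, Equiv.Perm.inv_def,
    Equiv.coe_mulLeft]
  group
end

section
/- Let G be a finite group and ψ: G → G an abelian endomorphism. For g ∈ G define η'_g ∈ Perm(G) by η'_g(h) = h ψ(h)⁻¹ g ψ(h), and set N'_ψ = {η'_g : g ∈ G}. Then N'_ψ is a regular, G-stable subgroup of Perm(G), and N'_ψ equals the centralizer of N_ψ in Perm(G). -/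
/-- For an abelian endomorphism `ψ` of a finite group `G`, the set
`N'_ψ = {η'_g : g ∈ G}` with `η'_g (h) = h ψ(h)⁻¹ g ψ(h)` is a regular, `G`-stable
subgroup of `Perm G`, and it equals the centralizer of `N_ψ` in `Perm G`. -/
theorem opposite_subgroup_regular_stable_centralizer {G : Type*} [Group G] [Finite G]
    (ψ : G →* G) (hab : ∀ x y : G, ψ x * ψ y = ψ y * ψ x)
    (η η' : G → Equiv.Perm G)
    (hη : ∀ g h : G, η g h = g * (ψ g)⁻¹ * h * ψ g)
    (hη' : ∀ g h : G, η' g h = h * (ψ h)⁻¹ * g * ψ h) :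
    ∃ N' : Subgroup (Equiv.Perm G),
      (N' : Set (Equiv.Perm G)) = Set.range η' ∧
      (∀ h k : G, ∃! π : Equiv.Perm G, π ∈ N' ∧ π h = k) ∧
      (∀ g : G, ∀ π ∈ N', (Equiv.mulLeft g) * π * (Equiv.mulLeft g)⁻¹ ∈ N') ∧
      (N' : Set (Equiv.Perm G)) = {π : Equiv.Perm G | ∀ g : G, π * η g = η g * π} := by
  have key : ∀ π : Equiv.Perm G, (∀ g : G, π * η g = η g * π) ↔ π ∈ Set.range η' := by
    intro π
    constructor
    · intro h
      refine ⟨π 1, ?_⟩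
      ext g
      have h1 := congrArg (fun σ : Equiv.Perm G => σ 1) (h g)
      simp only [Equiv.Perm.mul_apply, hη] at h1
      rw [hη', ← h1]
      congr 1
      group
    · rintro ⟨k, rfl⟩ g
      ext h
      simp only [Equiv.Perm.mul_apply, hη, hη']
      have e : ψ (g * (ψ g)⁻¹ * h * ψ g) = ψ g * ψ h := by
        simp only [map_mul, map_inv]
        rw [mul_assoc, hab h (ψ g)]
        group
      rw [e]
      have e2 : ψ g * (ψ g * ψ h)⁻¹ = (ψ h)⁻¹ := by
        rw [hab g h]; group
      calc g * (ψ g)⁻¹ * h * ψ g * (ψ g * ψ h)⁻¹ * k * (ψ g * ψ h)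
          = g * (ψ g)⁻¹ * h * (ψ g * (ψ g * ψ h)⁻¹) * k * (ψ g * ψ h) := by group
        _ = _ := by rw [e2, hab g h]; group
  have hset : ((Subgroup.centralizer (Set.range η) : Subgroup (Equiv.Perm G)) :
      Set (Equiv.Perm G)) = {π : Equiv.Perm G | ∀ g : G, π * η g = η g * π} := by
    ext π
    simp only [SetLike.mem_coe, Subgroup.mem_centralizer_iff, Set.forall_mem_range,
      Set.mem_setOf_eq]
    exact forall_congr' fun g => eq_comm
  have hrange : ((Subgroup.centralizer (Set.range η) : Subgroup (Equiv.Perm G)) :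
      Set (Equiv.Perm G)) = Set.range η' := by
    rw [hset]; ext π; exact key π
  have hmem : ∀ π : Equiv.Perm G, π ∈ Subgroup.centralizer (Set.range η) ↔ π ∈ Set.range η' := by
    intro π
    rw [← hrange, SetLike.mem_coe]
  refine ⟨Subgroup.centralizer (Set.range η), hrange, ?_, ?_, hset⟩
  · intro h k
    refine ⟨η' (ψ h * h⁻¹ * k * (ψ h)⁻¹), ⟨(hmem _).2 ⟨_, rfl⟩, ?_⟩, ?_⟩
    · rw [hη']; group
    · rintro π ⟨hπ, hk⟩
      obtain ⟨a, rfl⟩ := (hmem _).1 hπ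
      rw [hη'] at hk
      subst hk
      congr 1
      group
  · intro g π hπ
    obtain ⟨k, rfl⟩ := (hmem _).1 hπ
    refine (hmem _).2 ⟨ψ g * k * (ψ g)⁻¹, ?_⟩
    ext h
    have e : (Equiv.mulLeft g)⁻¹ h = g⁻¹ * h := rfl
    simp only [Equiv.Perm.mul_apply, e, hη', Equiv.coe_mulLeft, map_mul, map_inv]
    group
end

section
/- Let G be a group with center Z(G), and let ψ₁, ψ₂: G → G be abelian endomorphisms. Then N_{ψ₁} = N_{ψ₂} (as subsets of Perm(G)) if and only if there exists a group homomorphism ζ: G → Z(G) such that ψ₁(g) = ζ(g) ψ₂(g) for all g ∈ G. -/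
/-- For abelian endomorphisms `ψ₁, ψ₂` of a group `G`,
`N_{ψ₁} = N_{ψ₂}` (as subsets of `Perm G`) iff there is a homomorphism `ζ : G → Z(G)`
with `ψ₁(g) = ζ(g) ψ₂(g)` for all `g`. -/
theorem range_eta_eq_iff_exists_central_hom {G : Type*} [Group G]
    (ψ₁ ψ₂ : G →* G)
    (hab₁ : ∀ x y : G, ψ₁ x * ψ₁ y = ψ₁ y * ψ₁ x)
    (hab₂ : ∀ x y : G, ψ₂ x * ψ₂ y = ψ₂ y * ψ₂ x)
    (η₁ η₂ : G → Equiv.Perm G)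
    (hη₁ : ∀ g h : G, η₁ g h = g * (ψ₁ g)⁻¹ * h * ψ₁ g)
    (hη₂ : ∀ g h : G, η₂ g h = g * (ψ₂ g)⁻¹ * h * ψ₂ g) :
    Set.range η₁ = Set.range η₂ ↔
      ∃ ζ : G →* G, (∀ g : G, ζ g ∈ Subgroup.center G) ∧ ∀ g : G, ψ₁ g = ζ g * ψ₂ g := by
  constructor
  · intro H
    have key : ∀ g, η₁ g = η₂ g := by
      intro g
      have hm : η₁ g ∈ Set.range η₂ := H ▸ Set.mem_range_self g
      obtain ⟨k, hk⟩ := hm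
      have h1 : η₂ k 1 = η₁ g 1 := by rw [hk]
      rw [hη₁, hη₂] at h1
      have : k = g := by simpa using h1
      rw [← hk, this]
    have hc : ∀ g h : G, h * (ψ₁ g * (ψ₂ g)⁻¹) = (ψ₁ g * (ψ₂ g)⁻¹) * h := by
      intro g h
      have h1 : η₁ g h = η₂ g h := by rw [key]
      rw [hη₁, hη₂] at h1
      have h2 : (ψ₁ g)⁻¹ * h * ψ₁ g = (ψ₂ g)⁻¹ * h * ψ₂ g := by
        apply mul_left_cancel (a := g)
        simpa only [mul_assoc] using h1
      calc h * (ψ₁ g * (ψ₂ g)⁻¹) = ψ₁ g * ((ψ₁ g)⁻¹ * h * ψ₁ g) * (ψ₂ g)⁻¹ := by group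
        _ = _ := by rw [h2]; group
    refine ⟨MonoidHom.mk' (fun g => ψ₁ g * (ψ₂ g)⁻¹) ?_, ?_, ?_⟩
    · intro a b
      calc ψ₁ (a * b) * (ψ₂ (a * b))⁻¹
          = ψ₁ a * ((ψ₁ b * (ψ₂ b)⁻¹) * (ψ₂ a)⁻¹) := by
            rw [map_mul, map_mul]; group
        _ = _ := by rw [← hc b (ψ₂ a)⁻¹]; group
    · intro g
      rw [Subgroup.mem_center_iff]
      exact hc g
    · intro g
      simp
  · rintro ⟨ζ, hz, h⟩
    have : η₁ = η₂ := by
      funext g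
      ext x
      have hc := Subgroup.mem_center_iff.1 (hz g)
      rw [hη₁, hη₂, h g, mul_inv_rev]
      calc g * ((ψ₂ g)⁻¹ * (ζ g)⁻¹) * x * (ζ g * ψ₂ g)
          = g * (ψ₂ g)⁻¹ * (ζ g)⁻¹ * (x * ζ g) * ψ₂ g := by group
        _ = _ := by rw [hc x]; group
    rw [this]
end

section
/- Let G be a group with center Z(G), and let ψ₁, ψ₂: G → G be abelian endomorphisms. Then N_{ψ₁} = N_{ψ₂} (as subsets of Perm(G)) if and only if ψ₂(g) ψ₁(g⁻¹) ∈ Z(G) for all g ∈ G. -/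
/-- For abelian endomorphisms `ψ₁, ψ₂` of a group `G`,
`N_{ψ₁} = N_{ψ₂}` (as subsets of `Perm G`) iff `ψ₂(g) ψ₁(g⁻¹) ∈ Z(G)` for all `g ∈ G`. -/
theorem range_eta_eq_iff_central {G : Type*} [Group G]
    (ψ₁ ψ₂ : G →* G)
    (hab₁ : ∀ x y : G, ψ₁ x * ψ₁ y = ψ₁ y * ψ₁ x)
    (hab₂ : ∀ x y : G, ψ₂ x * ψ₂ y = ψ₂ y * ψ₂ x)
    (η₁ η₂ : G → Equiv.Perm G)
    (hη₁ : ∀ g h : G, η₁ g h = g * (ψ₁ g)⁻¹ * h * ψ₁ g)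
    (hη₂ : ∀ g h : G, η₂ g h = g * (ψ₂ g)⁻¹ * h * ψ₂ g) :
    Set.range η₁ = Set.range η₂ ↔
      ∀ g : G, ψ₂ g * ψ₁ (g⁻¹) ∈ Subgroup.center G := by
  have key : ∀ a b : G, (∀ h : G, a⁻¹ * h * a = b⁻¹ * h * b) ↔
      b * a⁻¹ ∈ Subgroup.center G := by
    intro a b
    rw [Subgroup.mem_center_iff]
    constructor
    · intro H h
      have e : b * (a⁻¹ * h * a) * a⁻¹ = b * (b⁻¹ * h * b) * a⁻¹ := by rw [H h]
      calc h * (b * a⁻¹) = b * (b⁻¹ * h * b) * a⁻¹ := by group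
        _ = b * (a⁻¹ * h * a) * a⁻¹ := e.symm
        _ = b * a⁻¹ * h := by group
    · intro H h
      calc a⁻¹ * h * a = b⁻¹ * (b * a⁻¹ * h) * a := by group
        _ = b⁻¹ * (h * (b * a⁻¹)) * a := by rw [H h]
        _ = b⁻¹ * h * b := by group
  have pt : ∀ g : G, η₁ g = η₂ g ↔ ψ₂ g * ψ₁ (g⁻¹) ∈ Subgroup.center G := by
    intro g
    rw [map_inv, ← key, Equiv.ext_iff]
    simp only [hη₁, hη₂, mul_assoc, mul_right_inj]
  have o₁ : ∀ g : G, η₁ g 1 = g := by intro g; simp [hη₁]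
  have o₂ : ∀ g : G, η₂ g 1 = g := by intro g; simp [hη₂]
  constructor
  · intro H g
    rw [← pt]
    have hm : η₁ g ∈ Set.range η₂ := H ▸ Set.mem_range_self g
    obtain ⟨k, hk⟩ := hm
    have : k = g := by rw [← o₂ k, hk, o₁]
    rw [← hk, this]
  · intro H
    have : η₁ = η₂ := funext fun g => (pt g).2 (H g)
    rw [this]
end

section
/- Let G be a finite group and Ψ: G → G a fixed point free abelian endomorphism. Then: (i) the map g ↦ g Ψ(g)⁻¹ is a bijection of G; (ii) the unique map ψ: G → G satisfying ψ(g Ψ(g)⁻¹) = Ψ(g)⁻¹ for all g ∈ G is a fixed point free abelian endomorphism of G; and (iii) for all g, h ∈ G one has η_{g Ψ(g)⁻¹}(h) = g h Ψ(g)⁻¹ (where η is formed with respect to ψ), so that N_ψ = {h ↦ g h Ψ(g)⁻¹ : g ∈ G}. -/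
/-- Let `Ψ` be a fixed point free abelian endomorphism of a finite
group `G`. Then (i) `g ↦ g Ψ(g)⁻¹` is a bijection of `G`; (ii) any map `ψ : G → G`
satisfying `ψ(g Ψ(g)⁻¹) = Ψ(g)⁻¹` for all `g` (it is unique) is a fixed point free
abelian endomorphism; (iii) `η_{g Ψ(g)⁻¹}(h) = g h Ψ(g)⁻¹` for all `g, h ∈ G`, where
`η` is formed with respect to `ψ`. -/
theorem fpf_quasi_inverse {G : Type*} [Group G] [Finite G]
    (Ψ : G →* G) (hab : ∀ x y : G, Ψ x * Ψ y = Ψ y * Ψ x)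
    (hfpf : ∀ g : G, Ψ g = g → g = 1) :
    Function.Bijective (fun g : G => g * (Ψ g)⁻¹) ∧
    (∃! ψ : G → G, ∀ g : G, ψ (g * (Ψ g)⁻¹) = (Ψ g)⁻¹) ∧
    (∀ ψ : G → G, (∀ g : G, ψ (g * (Ψ g)⁻¹) = (Ψ g)⁻¹) →
      (∀ x y : G, ψ (x * y) = ψ x * ψ y) ∧
      (∀ x y : G, ψ x * ψ y = ψ y * ψ x) ∧
      (∀ g : G, ψ g = g → g = 1) ∧
      (∀ g h : G,
        (g * (Ψ g)⁻¹) * (ψ (g * (Ψ g)⁻¹))⁻¹ * h * ψ (g * (Ψ g)⁻¹) = g * h * (Ψ g)⁻¹)) := by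
  have hinj : Function.Injective (fun g : G => g * (Ψ g)⁻¹) := by
    intro g h e
    have e : g * (Ψ g)⁻¹ = h * (Ψ h)⁻¹ := e
    have h1 : Ψ (h⁻¹ * g) = h⁻¹ * g := by
      have h2 : g = h * (Ψ h)⁻¹ * Ψ g := by rw [← e]; group
      rw [map_mul, map_inv]
      calc (Ψ h)⁻¹ * Ψ g = h⁻¹ * (h * (Ψ h)⁻¹ * Ψ g) := by group
        _ = h⁻¹ * g := by rw [← h2]
    exact (inv_mul_eq_one.mp (hfpf _ h1)).symm
  have hbij : Function.Bijective (fun g : G => g * (Ψ g)⁻¹) :=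
    Finite.injective_iff_bijective.mp hinj
  have hsurj : ∀ x : G, ∃ g : G, g * (Ψ g)⁻¹ = x := hbij.2
  refine ⟨hbij, ?_, ?_⟩
  · choose s hs using hsurj
    refine ⟨fun x => (Ψ (s x))⁻¹, ?_, ?_⟩
    · intro g
      have : s (g * (Ψ g)⁻¹) = g := hinj (hs _)
      simp only [this]
    · intro φ hφ
      funext x
      have := hφ (s x)
      rwa [hs] at this
  · intro ψ hψ
    refine ⟨?_, ?_, ?_, ?_⟩
    · intro x y
      obtain ⟨g, rfl⟩ := hsurj x
      obtain ⟨h, rfl⟩ := hsurj y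
      obtain ⟨k, hk⟩ := hsurj (g * (Ψ g)⁻¹ * (h * (Ψ h)⁻¹))
      rw [← hk, hψ, hψ, hψ]
      have e : Ψ k = Ψ (g * h) := by
        apply hinj
        change Ψ k * (Ψ (Ψ k))⁻¹ = Ψ (g * h) * (Ψ (Ψ (g * h)))⁻¹
        have h1 := congrArg Ψ hk
        rw [map_mul Ψ k, map_inv] at h1
        rw [h1, map_mul Ψ (g * (Ψ g)⁻¹), map_mul Ψ g, mul_assoc, hab (Ψ g)⁻¹]
        simp only [map_mul, map_inv, mul_inv_rev, mul_assoc]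
      rw [e, map_mul, hab g h, mul_inv_rev]
    · intro x y
      obtain ⟨g, rfl⟩ := hsurj x
      obtain ⟨h, rfl⟩ := hsurj y
      rw [hψ, hψ, ← map_inv, ← map_inv, hab]
    · intro x hx
      obtain ⟨g, rfl⟩ := hsurj x
      rw [hψ] at hx
      have : g = 1 := by simpa using hx.symm
      simp [this]
    · intro g h
      rw [hψ]
      group
end

section
/- Let G be a finite group, G' a normal subgroup of G, and G'' an abelian subgroup of G with G' ∩ G'' = {1} and |G'| · |G''| = |G|. Then the map ψ: G → G defined by ψ(hk) = k for h ∈ G', k ∈ G'' is a well-defined endomorphism of G with abelian image; for all h ∈ G', k ∈ G'' the permutation η_{hk} is given by η_{hk}(x) = h x k for all x ∈ G; and the subgroup N_ψ = {η_{hk} : h ∈ G', k ∈ G''} of Perm(G) is isomorphic to the direct product G' × G''. -/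
/-- Let `G` be finite, `G' ◁ G`, `G'' ≤ G` abelian with
`G' ∩ G'' = 1` and `|G'|·|G''| = |G|`. Then `ψ(hk) = k` (for `h ∈ G'`, `k ∈ G''`) is a
well-defined endomorphism with abelian image, `η_{hk}(x) = h x k`, and
`N_ψ ≅ G' × G''`. -/
theorem normal_complement_abelian_map {G : Type*} [Group G] [Finite G]
    (G' G'' : Subgroup G) (hn : G'.Normal)
    (hcomm : ∀ x y : G, x ∈ G'' → y ∈ G'' → x * y = y * x)
    (hint : G' ⊓ G'' = ⊥)
    (hcard : Nat.card G' * Nat.card G'' = Nat.card G) :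
    ∃ ψ : G →* G,
      (∀ h ∈ G', ∀ k ∈ G'', ψ (h * k) = k) ∧
      (∀ x y : G, ψ x * ψ y = ψ y * ψ x) ∧
      (∀ h ∈ G', ∀ k ∈ G'', ∀ x : G,
        (h * k) * (ψ (h * k))⁻¹ * x * ψ (h * k) = h * x * k) ∧
      ∃ N : Subgroup (Equiv.Perm G),
        ((N : Set (Equiv.Perm G)) =
          {π : Equiv.Perm G | ∃ g : G, ∀ x : G, π x = g * (ψ g)⁻¹ * x * ψ g}) ∧
        Nonempty (N ≃* G' × G'') := by
  have hdis : Disjoint G' G'' := disjoint_iff.mpr hint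
  have hC : Subgroup.IsComplement' G' G'' :=
    Subgroup.isComplement'_of_card_mul_and_disjoint hcard hdis
  have hex : ∀ g : G, ∃ h k : G, h ∈ G' ∧ k ∈ G'' ∧ h * k = g := by
    intro g
    obtain ⟨⟨h, k⟩, e⟩ := hC.2 g
    exact ⟨h, k, h.2, k.2, e⟩
  have huniq : ∀ h ∈ G', ∀ k ∈ G'', ∀ h' ∈ G', ∀ k' ∈ G'', h * k = h' * k' → k = k' := by
    intro h hh k hk h' hh' k' hk' e
    have := @hC.1 (⟨h, hh⟩, ⟨k, hk⟩) (⟨h', hh'⟩, ⟨k', hk'⟩) e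
    simpa using congrArg (fun p => (p.2 : G)) this
  choose a b ha hb hab using hex
  have key : ∀ h ∈ G', ∀ k ∈ G'', b (h * k) = k := fun h hh k hk =>
    huniq _ (ha _) _ (hb _) _ hh _ hk (hab _)
  let ψ : G →* G := MonoidHom.mk' b (by
    intro x y
    have e : x * y = (a x * (b x * a y * (b x)⁻¹)) * (b x * b y) := by
      calc x * y = (a x * b x) * (a y * b y) := by rw [hab, hab]
        _ = _ := by group
    conv_lhs => rw [e]
    exact key _ (G'.mul_mem (ha x) (hn.conj_mem _ (ha y) _)) _ (G''.mul_mem (hb x) (hb y)))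
  have hψ : ∀ h ∈ G', ∀ k ∈ G'', ψ (h * k) = k := key
  have heta : ∀ h ∈ G', ∀ k ∈ G'', ∀ x : G,
        (h * k) * (ψ (h * k))⁻¹ * x * ψ (h * k) = h * x * k := by
    intro h hh k hk x
    rw [hψ h hh k hk]
    group
  let f : G' × G'' →* Equiv.Perm G := MonoidHom.mk'
    (fun p => (Equiv.mulLeft (p.1 : G)).trans (Equiv.mulRight (p.2 : G))) (by
      rintro ⟨h, k⟩ ⟨h', k'⟩
      ext x
      simp [mul_assoc, hcomm k k' k.2 k'.2])
  have hf : ∀ p x, f p x = p.1 * x * p.2 := fun p x => rfl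
  have hinj : Function.Injective f := by
    rw [injective_iff_map_eq_one]
    rintro ⟨h, k⟩ e
    have e1 : (h : G) * 1 * k = 1 := by
      have := hf (h, k) 1
      rw [e] at this
      exact this.symm
    have hk : (k : G) = 1 := huniq h h.2 k k.2 1 G'.one_mem 1 G''.one_mem (by simpa using e1)
    have hh : (h : G) = 1 := by simpa [hk] using e1
    ext
    · exact hh
    · exact hk
  refine ⟨ψ, hψ, fun x y => hcomm _ _ (hb x) (hb y), heta, f.range, ?_,
    ⟨(MonoidHom.ofInjective hinj).symm⟩⟩
  ext π
  constructor
  · rintro ⟨⟨h, k⟩, rfl⟩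
    exact ⟨h * k, fun x => (heta h h.2 k k.2 x).symm⟩
  · rintro ⟨g, hg⟩
    refine ⟨(⟨a g, ha g⟩, ⟨b g, hb g⟩), ?_⟩
    ext x
    have := heta (a g) (ha g) (b g) (hb g) x
    rw [hab] at this
    rw [hg, hf, this]
end

section
/- Let G be a group and ψ: G → G an abelian endomorphism. Define a binary operation ∘ on G by g ∘ h = g ψ(g)⁻¹ h ψ(g). Then (G, ∘) is a group with the same identity element as G, the map g ↦ η_g is a group isomorphism from (G, ∘) onto N_ψ, and the skew left brace relation g ∘ (h k) = (g ∘ h) g⁻¹ (g ∘ k) holds for all g, h, k ∈ G (where juxtaposition is the original multiplication of G). -/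
/-- For an abelian endomorphism `ψ` of a group `G`, the operation
`g ∘ h = g ψ(g)⁻¹ h ψ(g)` makes `G` a group with the same identity, `g ↦ η_g` is an
isomorphism from `(G, ∘)` onto `N_ψ`, and the skew left brace relation
`g ∘ (h k) = (g ∘ h) g⁻¹ (g ∘ k)` holds. -/
theorem abelian_map_brace {G : Type*} [Group G]
    (ψ : G →* G) (hab : ∀ x y : G, ψ x * ψ y = ψ y * ψ x)
    (circ : G → G → G)
    (hcirc : ∀ g h : G, circ g h = g * (ψ g)⁻¹ * h * ψ g)
    (η : G → Equiv.Perm G)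
    (hη : ∀ g h : G, η g h = g * (ψ g)⁻¹ * h * ψ g) :
    (∀ g h k : G, circ (circ g h) k = circ g (circ h k)) ∧
    (∀ g : G, circ 1 g = g ∧ circ g 1 = g) ∧
    (∀ g : G, ∃ g' : G, circ g g' = 1 ∧ circ g' g = 1) ∧
    Function.Injective η ∧
    (∀ g h : G, η (circ g h) = η g * η h) ∧
    (∃ N : Subgroup (Equiv.Perm G), (N : Set (Equiv.Perm G)) = Set.range η) ∧
    (∀ g h k : G, circ g (h * k) = circ g h * g⁻¹ * circ g k) := by
  have hψ : ∀ g h : G, ψ (circ g h) = ψ g * ψ h := by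
    intro g h
    rw [hcirc]
    simp only [map_mul, map_inv]
    rw [mul_assoc (ψ g), mul_assoc (ψ g), mul_assoc (ψ (ψ g))⁻¹, hab h (ψ g)]
    group
  have hassoc : ∀ g h k : G, circ (circ g h) k = circ g (circ h k) := by
    intro g h k
    rw [hcirc (circ g h) k, hψ, hab g h, hcirc g h, hcirc g (circ h k), hcirc h k]
    group
  have hη' : ∀ g h : G, η g h = circ g h := fun g h => by rw [hη, hcirc]
  have hone : ∀ g : G, circ 1 g = g ∧ circ g 1 = g := by
    intro g
    simp [hcirc]
  have hmul : ∀ g h : G, η (circ g h) = η g * η h := by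
    intro g h
    ext k
    simp only [Equiv.Perm.mul_apply, hη', hassoc]
  have hinv : ∀ g : G, ∃ g' : G, circ g g' = 1 ∧ circ g' g = 1 := by
    intro g
    have h1 : circ g (ψ g * g⁻¹ * (ψ g)⁻¹) = 1 := by rw [hcirc]; group
    refine ⟨ψ g * g⁻¹ * (ψ g)⁻¹, h1, ?_⟩
    have h2 := hψ g (ψ g * g⁻¹ * (ψ g)⁻¹)
    rw [h1, map_one] at h2
    rw [hcirc, eq_inv_of_mul_eq_one_right h2.symm]
    group
  have hη1 : η 1 = 1 := by
    ext k
    simp [hη]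
  refine ⟨hassoc, hone, hinv, ?_, hmul, ?_, ?_⟩
  · intro g h hgh
    have := congrArg (fun e : Equiv.Perm G => e 1) hgh
    simpa only [hη', (hone _).2] using this
  · refine ⟨{ carrier := Set.range η, mul_mem' := ?_, one_mem' := ⟨1, hη1⟩, inv_mem' := ?_ }, rfl⟩
    · rintro _ _ ⟨g, rfl⟩ ⟨h, rfl⟩
      exact ⟨circ g h, hmul g h⟩
    · rintro _ ⟨g, rfl⟩
      obtain ⟨g', h1, _⟩ := hinv g
      refine ⟨g', ?_⟩
      apply eq_inv_of_mul_eq_one_right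
      rw [← hmul, h1, hη1]
  · intro g h k
    simp only [hcirc]
    group
end

section
/- Let G be a group and ψ: G → G an abelian endomorphism, and define g ∘ h = g ψ(g)⁻¹ h ψ(g). Then the inverse of g in the group (G, ∘) is ḡ = ψ(g) g⁻¹ ψ(g)⁻¹, and the opposite skew brace relation g (h ∘ k) = (g h) ∘ ḡ ∘ (g k) holds for all g, h, k ∈ G (where juxtaposition is the original multiplication of G); hence (G, ·, ∘) is a bi-skew brace. -/
/-- For an abelian endomorphism `ψ` of a group `G`, with
`g ∘ h = g ψ(g)⁻¹ h ψ(g)`, the `∘`-inverse of `g` is `ḡ = ψ(g) g⁻¹ ψ(g)⁻¹`, and the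
opposite skew brace relation `g (h ∘ k) = (g h) ∘ ḡ ∘ (g k)` holds; hence
`(G, ·, ∘)` is a bi-skew brace. -/
theorem abelian_map_biskew {G : Type*} [Group G]
    (ψ : G →* G) (hab : ∀ x y : G, ψ x * ψ y = ψ y * ψ x)
    (circ : G → G → G)
    (hcirc : ∀ g h : G, circ g h = g * (ψ g)⁻¹ * h * ψ g) :
    (∀ g : G, circ g (ψ g * g⁻¹ * (ψ g)⁻¹) = 1 ∧ circ (ψ g * g⁻¹ * (ψ g)⁻¹) g = 1) ∧
    (∀ g h k : G,
      g * circ h k = circ (circ (g * h) (ψ g * g⁻¹ * (ψ g)⁻¹)) (g * k)) := by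
  have hconj : ∀ x y : G, ψ x * ψ y * (ψ x)⁻¹ = ψ y := by
    intro x y
    rw [hab x y, mul_inv_cancel_right]
  have hbar : ∀ g : G, ψ (ψ g * g⁻¹ * (ψ g)⁻¹) = (ψ g)⁻¹ := by
    intro g
    rw [map_mul, map_mul, map_inv ψ (ψ g), hconj, map_inv]
  refine ⟨fun g => ⟨?_, ?_⟩, fun g h k => ?_⟩
  · rw [hcirc]; group
  · rw [hcirc, hbar]; group
  · have h1 : circ (g * h) (ψ g * g⁻¹ * (ψ g)⁻¹) = g * (h * ((ψ h)⁻¹ * g⁻¹ * ψ h)) := by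
      rw [hcirc, map_mul]; group
    have h2 : ψ ((ψ h)⁻¹ * g⁻¹ * ψ h) = (ψ g)⁻¹ := by
      have := hconj (ψ h)⁻¹ g⁻¹
      rw [map_inv ψ (ψ h), inv_inv, map_inv ψ g] at this
      rw [map_mul, map_mul, map_inv ψ (ψ h), map_inv ψ g, this]
    have h3 : ψ (g * (h * ((ψ h)⁻¹ * g⁻¹ * ψ h))) = ψ h := by
      rw [map_mul, map_mul, h2, ← mul_assoc, hconj]
    rw [h1, hcirc (g * _), h3, hcirc]
    group
end

section
/- Let G be a finite group, ψ: G → G an abelian endomorphism, and define g ∘ h = g ψ(g)⁻¹ h ψ(g), so that (G, ∘) is a group. Let (N, ∗) be a group and α: G → N a bijection satisfying α(g ∘ h) = α(g) ∗ α(h) for all g, h ∈ G. For g ∈ G define π_g ∈ Perm(N) by π_g(n) = α(g · α⁻¹(n)) (where · is the original multiplication of G), and set P = {π_g : g ∈ G}. Then P is a subgroup of Perm(N) which is regular and N-stable, and the map g ↦ π_g is a group isomorphism from G onto P. -/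
/-- Let `ψ` be an abelian endomorphism of a finite group `G`, with
`g ∘ h = g ψ(g)⁻¹ h ψ(g)`, and let `(N, ∗)` be a group with a bijection `α : G → N`
satisfying `α(g ∘ h) = α(g) ∗ α(h)`. Then `P = {π_g : g ∈ G}`, where
`π_g(n) = α(g · α⁻¹(n))`, is a regular, `N`-stable subgroup of `Perm N`, and
`g ↦ π_g` is an isomorphism from `G` onto `P`. -/
theorem transport_regular_stable {G N : Type*} [Group G] [Finite G] [Group N]
    (ψ : G →* G) (hab : ∀ x y : G, ψ x * ψ y = ψ y * ψ x)
    (α : G ≃ N)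
    (hα : ∀ g h : G, α (g * (ψ g)⁻¹ * h * ψ g) = α g * α h)
    (π : G → Equiv.Perm N)
    (hπ : ∀ (g : G) (n : N), π g n = α (g * α.symm n)) :
    (∀ g h : G, π (g * h) = π g * π h) ∧
    Function.Injective π ∧
    ∃ P : Subgroup (Equiv.Perm N),
      (P : Set (Equiv.Perm N)) = Set.range π ∧
      (∀ m n : N, ∃! σ : Equiv.Perm N, σ ∈ P ∧ σ m = n) ∧
      (∀ m : N, ∀ σ ∈ P, (Equiv.mulLeft m) * σ * (Equiv.mulLeft m)⁻¹ ∈ P) := by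
  have hmul : ∀ g h : G, π (g * h) = π g * π h := by
    intro g h
    ext n
    simp [hπ, mul_assoc]
  refine ⟨hmul, ?_, (MonoidHom.mk' π hmul).range, ?_, ?_, ?_⟩
  · intro g h hgh
    have h1 := DFunLike.congr_fun hgh (α 1)
    simpa [hπ] using h1
  · ext σ
    simp
  · intro m n
    refine ⟨π (α.symm n * (α.symm m)⁻¹), ⟨⟨_, rfl⟩, by simp [hπ]⟩, ?_⟩
    rintro σ ⟨⟨g, rfl⟩, h⟩
    have h : π g m = n := h
    change π g = _
    rw [hπ] at h
    subst h
    simp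
  · rintro m σ ⟨g, rfl⟩
    obtain ⟨k, rfl⟩ := α.surjective m
    refine ⟨k * (ψ k)⁻¹ * g * (k * (ψ k)⁻¹)⁻¹, ?_⟩
    rw [eq_mul_inv_iff_mul_eq]
    ext n
    obtain ⟨h, rfl⟩ := α.surjective n
    change π _ (α k * α h) = α k * π g (α h)
    rw [hπ, hπ, ← hα, Equiv.symm_apply_apply, Equiv.symm_apply_apply, ← hα]
    congr 1
    group
end

section
/- Let G be a group and ψ: G → G an abelian endomorphism. Define R₁, R₂: G × G → G × G by R₁(g,h) = (ψ(g⁻¹) h ψ(g), ψ(hg⁻¹) h⁻¹ ψ(g) g ψ(g⁻¹) h ψ(gh⁻¹)) and R₂(g,h) = (g ψ(g⁻¹) h ψ(g) g⁻¹, ψ(h) g ψ(h⁻¹)). Then R₁ and R₂ each satisfy the set-theoretic Yang–Baxter (braid) equation (R×id)(id×R)(R×id) = (id×R)(R×id)(id×R) on G × G × G, and R₁ ∘ R₂ = id = R₂ ∘ R₁. -/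
/-- `R × id` acting on the first two coordinates of `B × B × B`. -/
def ybL {B : Type*} (R : B × B → B × B) : B × B × B → B × B × B :=
  fun p => ((R (p.1, p.2.1)).1, (R (p.1, p.2.1)).2, p.2.2)

/-- `id × R` acting on the last two coordinates of `B × B × B`. -/
def ybR {B : Type*} (R : B × B → B × B) : B × B × B → B × B × B :=
  fun p => (p.1, R p.2)

/-- `R` is a set-theoretic solution to the Yang–Baxter (braid) equation. -/
def IsYangBaxterSolution {B : Type*} (R : B × B → B × B) : Prop :=
  (ybL R) ∘ (ybR R) ∘ (ybL R) = (ybR R) ∘ (ybL R) ∘ (ybR R)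

/-- For an abelian endomorphism `ψ` of a group `G`, the maps
`R₁(g,h) = (ψ(g⁻¹) h ψ(g), ψ(hg⁻¹) h⁻¹ ψ(g) g ψ(g⁻¹) h ψ(gh⁻¹))` and
`R₂(g,h) = (g ψ(g⁻¹) h ψ(g) g⁻¹, ψ(h) g ψ(h⁻¹))` are set-theoretic solutions of the
Yang–Baxter equation and are mutually inverse. -/
theorem R1_R2_yang_baxter {G : Type*} [Group G]
    (ψ : G →* G) (hab : ∀ x y : G, ψ x * ψ y = ψ y * ψ x)
    (R₁ R₂ : G × G → G × G)
    (hR₁ : ∀ g h : G, R₁ (g, h) =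
      (ψ (g⁻¹) * h * ψ g,
        ψ (h * g⁻¹) * h⁻¹ * ψ g * g * ψ (g⁻¹) * h * ψ (g * h⁻¹)))
    (hR₂ : ∀ g h : G, R₂ (g, h) =
      (g * ψ (g⁻¹) * h * ψ g * g⁻¹, ψ h * g * ψ (h⁻¹))) :
    IsYangBaxterSolution R₁ ∧ IsYangBaxterSolution R₂ ∧
    R₁ ∘ R₂ = id ∧ R₂ ∘ R₁ = id := by
  have c1 : ∀ x y, ψ (ψ x * y * (ψ x)⁻¹) = ψ y := by
    intro x y; rw [map_mul, map_mul, hab (ψ x) y, mul_assoc, ← map_mul]; simp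
  have c2 : ∀ w g h, ψ (g * (ψ w)⁻¹ * h * ψ w * g⁻¹) = ψ h := by
    intro w g h
    have : g * (ψ w)⁻¹ * h * ψ w * g⁻¹ = (g * (ψ w)⁻¹) * h * (g * (ψ w)⁻¹)⁻¹ := by group
    rw [this, map_mul, map_mul, hab (g * (ψ w)⁻¹) h, mul_assoc, ← map_mul]; simp
  have c3 : ∀ x y, ψ ((ψ x)⁻¹ * y * ψ x) = ψ y := by
    intro x y; simpa using c1 x⁻¹ y
  have k2 : ∀ g h : G, R₂ (g, h) =
      (g * (ψ g)⁻¹ * h * ψ g * g⁻¹, ψ h * g * (ψ h)⁻¹) := by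
    intro g h; rw [hR₂]; simp
  have k1 : ∀ g h : G, R₁ (g, h) =
      ((ψ g)⁻¹ * h * ψ g,
        ψ h * (ψ g)⁻¹ * h⁻¹ * ψ g * g * (ψ g)⁻¹ * h * (ψ g * (ψ h)⁻¹)) := by
    intro g h; rw [hR₁]; simp
  have c4 : ∀ g h, ψ (ψ h * (ψ g)⁻¹ * h⁻¹ * ψ g * g * (ψ g)⁻¹ * h * (ψ g * (ψ h)⁻¹)) = ψ g := by
    intro g h
    have : ψ h * (ψ g)⁻¹ * h⁻¹ * ψ g * g * (ψ g)⁻¹ * h * (ψ g * (ψ h)⁻¹)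
      = (ψ h * (ψ g)⁻¹ * h⁻¹ * ψ g) * g * (ψ h * (ψ g)⁻¹ * h⁻¹ * ψ g)⁻¹ := by group
    rw [this, map_mul, map_mul, hab _ g, mul_assoc, ← map_mul]; simp
  have h12 : R₁ ∘ R₂ = id := by
    funext ⟨g, h⟩
    simp only [Function.comp, k2, k1, c1, c2, id]
    refine Prod.ext ?_ ?_ <;> simp only <;> group
  have h21 : R₂ ∘ R₁ = id := by
    funext ⟨g, h⟩
    simp only [Function.comp, k2, k1, c3, c4, id]
    refine Prod.ext ?_ ?_ <;> simp only <;> group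
  have y2 : IsYangBaxterSolution R₂ := by
    funext ⟨x, y, z⟩
    simp only [Function.comp, ybL, ybR, k2, c1, c2]
    have e1 := hab x y
    have e2 := hab x z
    have e3 := hab y z
    generalize ψ x = a at *
    generalize ψ y = b at *
    generalize ψ z = c at *
    have cj : ∀ u v : G, u * v = v * u → ∀ t, u * (v * (u⁻¹ * t)) = v * t := by
      intro u v e t
      rw [← mul_assoc, e]; simp [mul_assoc]
    have cj' : ∀ u v : G, u * v = v * u → ∀ t, u⁻¹ * (v * (u * t)) = v * t := by
      intro u v e t
      rw [← mul_assoc v, ← e]; simp [mul_assoc]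
    have i1 : a * b⁻¹ = b⁻¹ * a := (Commute.inv_right (show Commute a b from e1)).eq
    have i2 : c * a⁻¹ = a⁻¹ * c := (Commute.inv_right (show Commute c a from e2.symm)).eq
    have f1 := cj a b e1
    have f2 := cj a _ i1
    have f3 := cj' c a e2.symm
    have f4 := cj' c _ i2
    have f5 : c⁻¹ * b⁻¹ = b⁻¹ * c⁻¹ := by rw [← mul_inv_rev, ← mul_inv_rev, e3]
    have f6 : ∀ t, c * (b * t) = b * (c * t) := by
      intro t; rw [← mul_assoc, ← e3, mul_assoc]
    refine Prod.ext ?_ (Prod.ext ?_ ?_) <;> simp only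
    · simp [mul_assoc, f1, f2]
    · simp [mul_assoc, f3, f4]
    · simp [mul_assoc, f5, f6]
  refine ⟨?_, y2, h12, h21⟩
  have a12 : ∀ p, R₁ (R₂ p) = p := congrFun h12
  have a21 : ∀ p, R₂ (R₁ p) = p := congrFun h21
  have L12 : ∀ p, ybL R₁ (ybL R₂ p) = p := by
    rintro ⟨x, y, z⟩; simp [ybL, a12]
  have L21 : ∀ p, ybL R₂ (ybL R₁ p) = p := by
    rintro ⟨x, y, z⟩; simp [ybL, a21]
  have M12 : ∀ p, ybR R₁ (ybR R₂ p) = p := by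
    rintro ⟨x, y, z⟩; simp [ybR, a12]
  have M21 : ∀ p, ybR R₂ (ybR R₁ p) = p := by
    rintro ⟨x, y, z⟩; simp [ybR, a21]
  funext p
  have := congrFun y2 (ybL R₁ (ybR R₁ (ybL R₁ p)))
  simp only [Function.comp, L21, M21] at this
  have h := congrArg (fun q => ybR R₁ (ybL R₁ (ybR R₁ q))) this
  simp only [L12, M12] at h
  exact h.symm
end

section
/- Let G be a group with center Z(G) and ψ: G → G an abelian endomorphism. For g ∈ G, the permutation η_g equals a left translation λ(k) for some k ∈ G if and only if ψ(g) ∈ Z(G), in which case η_g = λ(g). In other words, N_ψ ∩ λ(G) = {λ(g) : g ∈ G, ψ(g) ∈ Z(G)}. -/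
/-- For an abelian endomorphism `ψ` of a group `G`, the permutation
`η_g` is a left translation `λ(k)` for some `k` iff `ψ(g) ∈ Z(G)`, in which case
`η_g = λ(g)`; thus `N_ψ ∩ λ(G) = {λ(g) : ψ(g) ∈ Z(G)}`. -/
theorem eta_eq_mulLeft_iff_center {G : Type*} [Group G]
    (ψ : G →* G) (hab : ∀ x y : G, ψ x * ψ y = ψ y * ψ x)
    (η : G → Equiv.Perm G)
    (hη : ∀ g h : G, η g h = g * (ψ g)⁻¹ * h * ψ g) :
    (∀ g : G, (∃ k : G, η g = Equiv.mulLeft k) ↔ ψ g ∈ Subgroup.center G) ∧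
    (∀ g : G, ψ g ∈ Subgroup.center G → η g = Equiv.mulLeft g) ∧
    (Set.range η ∩ Set.range (Equiv.mulLeft : G → Equiv.Perm G) =
      {π : Equiv.Perm G | ∃ g : G, ψ g ∈ Subgroup.center G ∧ π = Equiv.mulLeft g}) := by
  have h2 : ∀ g : G, ψ g ∈ Subgroup.center G → η g = Equiv.mulLeft g := by
    intro g hg
    ext h
    rw [Subgroup.mem_center_iff] at hg
    rw [hη, Equiv.coe_mulLeft, mul_assoc, hg h]
    group
  have h1 : ∀ g k : G, η g = Equiv.mulLeft k → ψ g ∈ Subgroup.center G := by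
    intro g k hk
    have e : ∀ h, g * (ψ g)⁻¹ * h * ψ g = k * h := by
      intro h
      rw [← hη, hk, Equiv.coe_mulLeft]
    have e1 : g = k := by simpa using e 1
    subst e1
    rw [Subgroup.mem_center_iff]
    intro h
    have e2 := e h
    rw [mul_assoc, mul_assoc, mul_right_inj, inv_mul_eq_iff_eq_mul] at e2
    exact e2
  refine ⟨fun g => ⟨fun ⟨k, hk⟩ => h1 g k hk, fun hg => ⟨g, h2 g hg⟩⟩, h2, ?_⟩
  ext π
  constructor
  · rintro ⟨⟨g, rfl⟩, ⟨k, hk⟩⟩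
    have hg := h1 g k hk.symm
    exact ⟨g, hg, h2 g hg⟩
  · rintro ⟨g, hg, rfl⟩
    exact ⟨⟨g, h2 g hg⟩, ⟨g, rfl⟩⟩
end

section
/- Let G be a group with center Z(G) and ψ: G → G an abelian endomorphism. For g ∈ G, the permutation η_g equals a right translation (h ↦ h k for some fixed k ∈ G) if and only if g ψ(g)⁻¹ ∈ Z(G), in which case η_g(h) = h g for all h ∈ G. In other words, N_ψ ∩ ρ(G) = {h ↦ hg : g ∈ G, g ψ(g⁻¹) ∈ Z(G)}, where ρ(G) denotes the set of all right translations of G. -/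
/-- For an abelian endomorphism `ψ` of a group `G`, the permutation
`η_g` is a right translation `h ↦ h k` for some `k` iff `g ψ(g)⁻¹ ∈ Z(G)`, in which
case `η_g (h) = h g`; thus `N_ψ ∩ ρ(G) = {h ↦ hg : g ψ(g⁻¹) ∈ Z(G)}`. -/
theorem eta_eq_mulRight_iff_center {G : Type*} [Group G]
    (ψ : G →* G) (hab : ∀ x y : G, ψ x * ψ y = ψ y * ψ x)
    (η : G → Equiv.Perm G)
    (hη : ∀ g h : G, η g h = g * (ψ g)⁻¹ * h * ψ g) :
    (∀ g : G, (∃ k : G, η g = Equiv.mulRight k) ↔ g * (ψ g)⁻¹ ∈ Subgroup.center G) ∧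
    (∀ g : G, g * (ψ g)⁻¹ ∈ Subgroup.center G → ∀ h : G, η g h = h * g) ∧
    (Set.range η ∩ Set.range (Equiv.mulRight : G → Equiv.Perm G) =
      {π : Equiv.Perm G |
        ∃ g : G, g * ψ (g⁻¹) ∈ Subgroup.center G ∧ π = Equiv.mulRight g}) := by
  have key : ∀ g : G, g * (ψ g)⁻¹ ∈ Subgroup.center G → ∀ h : G, η g h = h * g := by
    intro g hg h
    rw [hη, ← Subgroup.mem_center_iff.mp hg h]
    group
  have key2 : ∀ g : G, g * (ψ g)⁻¹ ∈ Subgroup.center G → η g = Equiv.mulRight g := by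
    intro g hg
    ext h
    rw [key g hg h]
    rfl
  have main : ∀ g k : G, η g = Equiv.mulRight k → g * (ψ g)⁻¹ ∈ Subgroup.center G := by
    intro g k hk
    have e : ∀ h : G, g * (ψ g)⁻¹ * h * ψ g = h * k := by
      intro h
      rw [← hη, hk]
      rfl
    have h1 : g = k := by simpa using e 1
    rw [Subgroup.mem_center_iff]
    intro h
    have h2 := e h
    rw [← h1] at h2
    rw [← mul_assoc, ← h2]
    group
  refine ⟨fun g => ⟨fun ⟨k, hk⟩ => main g k hk, fun hg => ⟨g, key2 g hg⟩⟩, key, ?_⟩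
  ext π
  constructor
  · rintro ⟨⟨g, rfl⟩, ⟨k, hk⟩⟩
    have hg := main g k hk.symm
    exact ⟨g, by rwa [map_inv], key2 g hg⟩
  · rintro ⟨g, hg, rfl⟩
    rw [map_inv] at hg
    exact ⟨⟨g, key2 g hg⟩, ⟨g, rfl⟩⟩
end

section
/- Let G be a finite group and ψ: G → G an abelian endomorphism. Let G₀ = ker ψ and G₁ = {g ∈ G : ψ(g) = g} (the subgroup of fixed points). Then N_ψ contains a subgroup isomorphic to the direct product G₀ × G₁; in particular, if |G₀| · |G₁| = |G|, then N_ψ is isomorphic to G₀ × G₁. -/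
/-- Let `ψ` be an abelian endomorphism of a finite group `G`, with
kernel `G₀ = ker ψ` and fixed-point subgroup `G₁ = {g : ψ(g) = g}`. Then `N_ψ`
contains a subgroup isomorphic to `G₀ × G₁`; in particular, if `|G₀|·|G₁| = |G|` then
`N_ψ ≅ G₀ × G₁`. -/
theorem subgroup_iso_ker_prod_fixed {G : Type*} [Group G] [Finite G]
    (ψ : G →* G) (hab : ∀ x y : G, ψ x * ψ y = ψ y * ψ x)
    (η : G → Equiv.Perm G)
    (hη : ∀ g h : G, η g h = g * (ψ g)⁻¹ * h * ψ g)
    (G₁ : Subgroup G) (hG₁ : (G₁ : Set G) = {g : G | ψ g = g})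
    (N : Subgroup (Equiv.Perm G)) (hN : (N : Set (Equiv.Perm G)) = Set.range η) :
    (∃ M : Subgroup (Equiv.Perm G), M ≤ N ∧ Nonempty (M ≃* ψ.ker × G₁)) ∧
    (Nat.card ψ.ker * Nat.card G₁ = Nat.card G → Nonempty (N ≃* ψ.ker × G₁)) := by
  have hf : ∀ f : G₁, ψ f = f := fun f => by
    have h : (f : G) ∈ (G₁ : Set G) := f.2
    rw [hG₁] at h
    exact h
  have hk : ∀ k : ψ.ker, ψ k = 1 := fun k => k.2
  let Φ : ψ.ker × G₁ →* Equiv.Perm G :=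
    { toFun := fun p => Equiv.mulLeft (p.1 : G) * Equiv.mulRight ((p.2 : G)⁻¹)
      map_one' := by ext h; simp
      map_mul' := by
        intro p q
        ext h
        simp [mul_assoc] }
  have hΦ : ∀ p h, Φ p h = p.1 * (h * (p.2 : G)⁻¹) := fun p h => rfl
  have hinj : Function.Injective Φ := by
    rw [injective_iff_map_eq_one]
    rintro ⟨k, f⟩ h
    have h1 := congrArg (fun σ : Equiv.Perm G => σ 1) h
    simp only [hΦ, one_mul, Equiv.Perm.one_apply] at h1
    have h2 : (k : G) = f := mul_inv_eq_one.mp h1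
    have h3 : (f : G) = 1 := by rw [← hf f, ← h2, hk]
    have h4 : (k : G) = 1 := h2.trans h3
    exact Prod.ext (Subtype.ext h4) (Subtype.ext h3)
  have hmem : ∀ g, η g ∈ N := fun g => by
    have : η g ∈ (N : Set (Equiv.Perm G)) := by rw [hN]; exact ⟨g, rfl⟩
    exact this
  have hle : Φ.range ≤ N := by
    rintro _ ⟨⟨k, f⟩, rfl⟩
    have : Φ (k, f) = η k * η ((f⁻¹ : G₁) : G) := by
      ext h
      rw [Equiv.Perm.mul_apply, hη, hη, hΦ, hk, hf]
      simp
    rw [this]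
    exact N.mul_mem (hmem _) (hmem _)
  let e := MonoidHom.ofInjective hinj
  refine ⟨⟨Φ.range, hle, ⟨e.symm⟩⟩, fun hc => ?_⟩
  have hcN : Nat.card N ≤ Nat.card G := by
    have hs : Function.Surjective (fun g => (⟨η g, hmem g⟩ : N)) := by
      rintro ⟨σ, hσ⟩
      have h : σ ∈ (N : Set (Equiv.Perm G)) := hσ
      rw [hN] at h
      obtain ⟨g, rfl⟩ := h
      exact ⟨g, rfl⟩
    exact Nat.card_le_card_of_surjective _ hs
  have hcM : Nat.card Φ.range = Nat.card G := by
    rw [← hc, ← Nat.card_prod, Nat.card_congr e.toEquiv]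
  have heq : Φ.range = N := Subgroup.eq_of_le_of_card_ge hle (by rw [hcM]; exact hcN)
  rw [← heq]
  exact ⟨e.symm⟩
end
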